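/- arXiv:1712.03913 — 3 statements merged into one kernel-verified Lean document; each statement's English description precedes it below -/
import Mathlib

section
/- Under Assumption 2.a, every Stackelberg equilibrium of the cooperative game is also a pure-strategy Nash equilibrium of the cooperative game. -/
open scoped Classical

noncomputable section

/-- Sequential game payoff of the leader (depends only on his own trajectory). -/
def aSeq {Γ1 : Type*} (κ : ℝ) (T1 : Γ1 → Prop) (p1 : Γ1 → ℝ) (i : Γ1) : ℝ :=
  if T1 i then κ else p1 i

/-- Follower payoff (same in the sequential and the cooperative game). -/
def bPay {Γ1 Γ2 : Type*} (κ lam : ℝ) (T2 : Γ2 → Prop) (C : Γ1 → Γ2 → Prop)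
    (p2 : Γ2 → ℝ) (i : Γ1) (j : Γ2) : ℝ :=
  if T2 j then κ else if C i j then lam else p2 j

/-- Cooperative game payoff of the leader. -/
def aPay {Γ1 Γ2 : Type*} (κ lam : ℝ) (T1 : Γ1 → Prop) (C : Γ1 → Γ2 → Prop)
    (p1 : Γ1 → ℝ) (i : Γ1) (j : Γ2) : ℝ :=
  if T1 i then κ else if C i j then lam else p1 i

/-- Blocking game payoff of the leader. -/
def aBl {Γ1 Γ2 : Type*} (κ lam w : ℝ) (T1 : Γ1 → Prop) (C : Γ1 → Γ2 → Prop)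
    (p1 : Γ1 → ℝ) (p2 : Γ2 → ℝ) (i : Γ1) (j : Γ2) : ℝ :=
  if T1 i then κ else if C i j then lam else if p1 i < p2 j then p1 i else p1 i + w

/-- Blocking game payoff of the follower. -/
def bBl {Γ1 Γ2 : Type*} (κ lam w : ℝ) (T2 : Γ2 → Prop) (C : Γ1 → Γ2 → Prop)
    (p1 : Γ1 → ℝ) (p2 : Γ2 → ℝ) (i : Γ1) (j : Γ2) : ℝ :=
  if T2 j then κ else if C i j then lam else if p1 i ≥ p2 j then p2 j else p2 j + w

/-- A trajectory pair is feasible: stays on track and does not collide. -/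
def Feasible {Γ1 Γ2 : Type*} (T1 : Γ1 → Prop) (T2 : Γ2 → Prop) (C : Γ1 → Γ2 → Prop)
    (i : Γ1) (j : Γ2) : Prop :=
  ¬ T1 i ∧ ¬ T2 j ∧ ¬ C i j

/-- Best-response set of player 2 to strategy `i` of player 1. -/
def BestResponse {Γ1 Γ2 : Type*} (B : Γ1 → Γ2 → ℝ) (i : Γ1) : Set Γ2 :=
  {j | ∀ j', B i j' ≤ B i j}

/-- Stackelberg equilibrium with player 1 as leader. -/
def StackelbergEq {Γ1 Γ2 : Type*} (A B : Γ1 → Γ2 → ℝ) (iStar : Γ1) (jStar : Γ2) : Prop :=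
  (∀ i, sInf (A i '' BestResponse B i) ≤ sInf (A iStar '' BestResponse B iStar)) ∧
  jStar ∈ BestResponse B iStar

/-- Pure-strategy Nash equilibrium. -/
def NashEq {Γ1 Γ2 : Type*} (A B : Γ1 → Γ2 → ℝ) (iStar : Γ1) (jStar : Γ2) : Prop :=
  (∀ i, A i jStar ≤ A iStar jStar) ∧ (∀ j, B iStar j ≤ B iStar jStar)

/-- Sequential maximization pair: the leader maximizes `aSeq`, the follower best responds. -/
def SeqMaxPair {Γ1 Γ2 : Type*} (κ lam : ℝ) (T1 : Γ1 → Prop) (T2 : Γ2 → Prop)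
    (C : Γ1 → Γ2 → Prop) (p1 : Γ1 → ℝ) (p2 : Γ2 → ℝ) (iS : Γ1) (jS : Γ2) : Prop :=
  (∀ i, aSeq κ T1 p1 i ≤ aSeq κ T1 p1 iS) ∧
  (∀ j, bPay κ lam T2 C p2 iS j ≤ bPay κ lam T2 C p2 iS jS)

/-- Assumption 2.a: a feasible trajectory pair exists. -/
def AssumptionA {Γ1 Γ2 : Type*} (T1 : Γ1 → Prop) (T2 : Γ2 → Prop)
    (C : Γ1 → Γ2 → Prop) : Prop :=
  ∃ i j, Feasible T1 T2 C i j

/-- Assumption 2.b. -/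
def AssumptionB {Γ1 Γ2 : Type*} (κ lam : ℝ) (T1 : Γ1 → Prop) (T2 : Γ2 → Prop)
    (C : Γ1 → Γ2 → Prop) (p1 : Γ1 → ℝ) (p2 : Γ2 → ℝ) : Prop :=
  (∃ i, ¬ T1 i) ∧
  ∃ jbar : Γ2, ∀ i' : Γ1, (∀ i, aSeq κ T1 p1 i ≤ aSeq κ T1 p1 i') →
    lam < bPay κ lam T2 C p2 i' jbar

/-- Blocking trajectory pair. -/
def BlockingPair {Γ1 Γ2 : Type*} (T1 : Γ1 → Prop) (T2 : Γ2 → Prop)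
    (C : Γ1 → Γ2 → Prop) (p1 : Γ1 → ℝ) (p2 : Γ2 → ℝ) (i : Γ1) (j : Γ2) : Prop :=
  Feasible T1 T2 C i j ∧ p2 j < p1 i ∧ ∀ jc, p2 j < p2 jc → (T2 jc ∨ C i jc)

/-!
Because `κ < lam < p2 j`, a best response leaves the track only if every follower trajectory does,
and it continues a leader trajectory feasibly whenever some follower trajectory does. Hence the
leader's worst case at `i` is `p1 i` as soon as `i` belongs to a feasible pair, so the Stackelberg
payoff of the leader is at least each such `p1 i`. A deviation of the leader against the on-track
trajectory `jStar` either forms a feasible pair, and earns no more than that, or is penalized and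
earns at most `lam`, which lies below every `p1 i`.
-/

section Stackelberg

variable {Γ1 Γ2 : Type*} {A B : Γ1 → Γ2 → ℝ} {iStar i : Γ1} {jStar : Γ2} {c : ℝ}

theorem StackelbergEq.le_of_forall_mem_bestResponse (hst : StackelbergEq A B iStar jStar)
    (hbdd : BddBelow (A iStar '' BestResponse B iStar)) (hne : (BestResponse B i).Nonempty)
    (hc : ∀ j ∈ BestResponse B i, c ≤ A i j) : c ≤ A iStar jStar :=
  calc
    c ≤ sInf (A i '' BestResponse B i) := le_csInf (hne.image _) (Set.forall_mem_image.2 hc)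
    _ ≤ sInf (A iStar '' BestResponse B iStar) := hst.1 i
    _ ≤ A iStar jStar := csInf_le hbdd (Set.mem_image_of_mem _ hst.2)

end Stackelberg

section Cooperative

variable {Γ1 Γ2 : Type*} {κ lam : ℝ} {T1 : Γ1 → Prop} {T2 : Γ2 → Prop} {C : Γ1 → Γ2 → Prop}
  {p1 : Γ1 → ℝ} {p2 : Γ2 → ℝ} {i : Γ1} {j k : Γ2}

theorem Feasible.aPay_eq (h : Feasible T1 T2 C i j) : aPay κ lam T1 C p1 i j = p1 i := by
  rw [aPay, if_neg h.1, if_neg h.2.2]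

theorem Feasible.bPay_eq (h : Feasible T1 T2 C i j) : bPay κ lam T2 C p2 i j = p2 j := by
  rw [bPay, if_neg h.2.1, if_neg h.2.2]

theorem le_aPay (hκ : κ ≤ lam) (hp1 : κ ≤ p1 i) : κ ≤ aPay κ lam T1 C p1 i j := by
  unfold aPay
  split_ifs
  exacts [le_rfl, hκ, hp1]

theorem aPay_le_of_not_feasible (hκ : κ ≤ lam) (hT2 : ¬ T2 j) (h : ¬ Feasible T1 T2 C i j) :
    aPay κ lam T1 C p1 i j ≤ lam := by
  unfold aPay
  split_ifs with hT1 hC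
  exacts [hκ, le_rfl, absurd ⟨hT1, hT2, hC⟩ h]

theorem lt_bPay_of_not_offTrack (hκ : κ < lam) (hp2 : κ < p2 j) (hT2 : ¬ T2 j) :
    κ < bPay κ lam T2 C p2 i j := by
  rw [bPay, if_neg hT2]
  split_ifs
  exacts [hκ, hp2]

theorem not_offTrack_of_mem_bestResponse (hκ : κ < lam) (hp2 : κ < p2 j) (hT2 : ¬ T2 j)
    (hk : k ∈ BestResponse (bPay κ lam T2 C p2) i) : ¬ T2 k := by
  intro hT2k
  have hlt : κ < bPay κ lam T2 C p2 i k := (lt_bPay_of_not_offTrack hκ hp2 hT2).trans_le (hk j)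
  rw [bPay, if_pos hT2k] at hlt
  exact hlt.false

theorem Feasible.of_mem_bestResponse (h : Feasible T1 T2 C i j) (hκ : κ < p2 j) (hlam : lam < p2 j)
    (hk : k ∈ BestResponse (bPay κ lam T2 C p2) i) : Feasible T1 T2 C i k := by
  have hle : p2 j ≤ bPay κ lam T2 C p2 i k := h.bPay_eq.ge.trans (hk j)
  unfold bPay at hle
  split_ifs at hle with hT2 hC
  exacts [absurd hle hκ.not_ge, absurd hle hlam.not_ge, ⟨h.1, hT2, hC⟩]

theorem stmt4_general {iStar : Γ1} {jStar : Γ2} (hκ : κ < lam) (hp1 : ∀ i, lam ≤ p1 i)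
    (hp2 : ∀ j, lam < p2 j) (hne : ∀ i, (BestResponse (bPay κ lam T2 C p2) i).Nonempty)
    (hA : AssumptionA T1 T2 C)
    (hst : StackelbergEq (aPay κ lam T1 C p1) (bPay κ lam T2 C p2) iStar jStar) :
    NashEq (aPay κ lam T1 C p1) (bPay κ lam T2 C p2) iStar jStar := by
  obtain ⟨i₀, j₀, h₀⟩ := hA
  have hbdd : BddBelow (aPay κ lam T1 C p1 iStar '' BestResponse (bPay κ lam T2 C p2) iStar) :=
    ⟨κ, Set.forall_mem_image.2 fun _ _ => le_aPay hκ.le (hκ.le.trans (hp1 iStar))⟩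
  have le_of_feasible {i j} (h : Feasible T1 T2 C i j) :
      p1 i ≤ aPay κ lam T1 C p1 iStar jStar :=
    hst.le_of_forall_mem_bestResponse hbdd (hne i) fun _ hk =>
      (h.of_mem_bestResponse (hκ.trans (hp2 j)) (hp2 j) hk).aPay_eq.ge
  have hT2 : ¬ T2 jStar :=
    not_offTrack_of_mem_bestResponse hκ (hκ.trans (hp2 j₀)) h₀.2.1 hst.2
  refine ⟨fun i => ?_, hst.2⟩
  by_cases h : Feasible T1 T2 C i jStar
  · exact h.aPay_eq.trans_le (le_of_feasible h)
  · calc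
      aPay κ lam T1 C p1 i jStar ≤ lam := aPay_le_of_not_feasible hκ.le hT2 h
      _ ≤ p1 i₀ := hp1 i₀
      _ ≤ aPay κ lam T1 C p1 iStar jStar := le_of_feasible h₀

end Cooperative

theorem stmt4 {Γ1 Γ2 : Type*} [Fintype Γ1] [Fintype Γ2] [Nonempty Γ1] [Nonempty Γ2]
    (κ lam : ℝ) (hκlam : κ < lam) (hlam0 : lam < 0)
    (T1 : Γ1 → Prop) (T2 : Γ2 → Prop) (C : Γ1 → Γ2 → Prop)
    (p1 : Γ1 → ℝ) (p2 : Γ2 → ℝ)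
    (hp1 : ∀ i, 0 < p1 i) (hp2 : ∀ j, 0 < p2 j)
    (hA : AssumptionA T1 T2 C)
    (iStar : Γ1) (jStar : Γ2)
    (hst : StackelbergEq (aPay κ lam T1 C p1) (bPay κ lam T2 C p2) iStar jStar) :
    NashEq (aPay κ lam T1 C p1) (bPay κ lam T2 C p2) iStar jStar := by
  exact stmt4_general hκlam (fun i => (hlam0.trans (hp1 i)).le) (fun j => hlam0.trans (hp2 j))
    (fun _ => Finite.exists_max _) hA hst

end
end

section
/- Under Assumption 2.a, every feasible pure-strategy Nash equilibrium of the cooperative game is better than every infeasible pure-strategy Nash equilibrium of the cooperative game. -/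
open scoped Classical

noncomputable section

/-! Leaving the track yields `κ`, the worst payoff of all, so a best response stays on the track as
soon as some trajectory does. Hence an infeasible equilibrium is a collision of two on-track
trajectories and pays `lam` to both players, less than any feasible pair pays. -/

section

variable {Γ1 Γ2 : Type*} {κ lam m : ℝ} {T1 : Γ1 → Prop} {T2 : Γ2 → Prop} {C : Γ1 → Γ2 → Prop}
  {p1 : Γ1 → ℝ} {p2 : Γ2 → ℝ} {i i' : Γ1} {j j' : Γ2}

theorem aPay_eq_bPay_flip :
    aPay κ lam T1 C p1 i j = bPay κ lam T1 (flip C) p1 j i :=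
  rfl

theorem bPay_of_offTrack (hj : T2 j) : bPay κ lam T2 C p2 i j = κ :=
  if_pos hj

theorem bPay_of_collision (hj : ¬ T2 j) (hC : C i j) : bPay κ lam T2 C p2 i j = lam :=
  (if_neg hj).trans (if_pos hC)

theorem bPay_of_not_collision (hj : ¬ T2 j) (hC : ¬ C i j) : bPay κ lam T2 C p2 i j = p2 j :=
  (if_neg hj).trans (if_neg hC)

theorem lt_bPay_of_onTrack (hj : ¬ T2 j) (hlam : m < lam) (hp : m < p2 j) :
    m < bPay κ lam T2 C p2 i j := by
  by_cases hC : C i j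
  · rwa [bPay_of_collision hj hC]
  · rwa [bPay_of_not_collision hj hC]

theorem onTrack_of_mem_bestResponse (hκlam : κ < lam) (hj' : ¬ T2 j') (hp : κ < p2 j')
    (hj : j ∈ BestResponse (bPay κ lam T2 C p2) i) : ¬ T2 j := by
  intro hoff
  have hlt : κ < bPay κ lam T2 C p2 i j' := lt_bPay_of_onTrack hj' hκlam hp
  have hle : bPay κ lam T2 C p2 i j' ≤ κ := (hj j').trans_eq (bPay_of_offTrack hoff)
  exact hlt.not_ge hle

theorem Feasible.payoffs_eq (h : Feasible T1 T2 C i j) :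
    aPay κ lam T1 C p1 i j = p1 i ∧ bPay κ lam T2 C p2 i j = p2 j := by
  obtain ⟨hi, hj, hC⟩ := h
  rw [aPay_eq_bPay_flip]
  exact ⟨bPay_of_not_collision hi hC, bPay_of_not_collision hj hC⟩

theorem NashEq.payoffs_eq_of_not_feasible (hκlam : κ < lam)
    (hi' : ¬ T1 i') (hp1 : κ < p1 i') (hj' : ¬ T2 j') (hp2 : κ < p2 j')
    (hN : NashEq (aPay κ lam T1 C p1) (bPay κ lam T2 C p2) i j) (hf : ¬ Feasible T1 T2 C i j) :
    aPay κ lam T1 C p1 i j = lam ∧ bPay κ lam T2 C p2 i j = lam := by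
  have hi : ¬ T1 i := onTrack_of_mem_bestResponse (C := flip C) hκlam hi' hp1 hN.1
  have hj : ¬ T2 j := onTrack_of_mem_bestResponse hκlam hj' hp2 hN.2
  have hC : C i j := by_contra fun hC ↦ hf ⟨hi, hj, hC⟩
  rw [aPay_eq_bPay_flip]
  exact ⟨bPay_of_collision hi hC, bPay_of_collision hj hC⟩

theorem stmt7_general (hκlam : κ < lam) (hp1 : lam < p1 i) (hp2 : lam < p2 j)
    (hf : Feasible T1 T2 C i j)
    (hN : NashEq (aPay κ lam T1 C p1) (bPay κ lam T2 C p2) i' j')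
    (hf' : ¬ Feasible T1 T2 C i' j') :
    aPay κ lam T1 C p1 i' j' < aPay κ lam T1 C p1 i j ∧
      bPay κ lam T2 C p2 i' j' < bPay κ lam T2 C p2 i j := by
  obtain ⟨ha, hb⟩ : aPay κ lam T1 C p1 i j = p1 i ∧ bPay κ lam T2 C p2 i j = p2 j :=
    hf.payoffs_eq
  obtain ⟨ha', hb'⟩ : aPay κ lam T1 C p1 i' j' = lam ∧ bPay κ lam T2 C p2 i' j' = lam :=
    hN.payoffs_eq_of_not_feasible hκlam hf.1 (hκlam.trans hp1) hf.2.1 (hκlam.trans hp2) hf'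
  rw [ha, hb, ha', hb']
  exact ⟨hp1, hp2⟩

end

theorem stmt7 {Γ1 Γ2 : Type*} [Fintype Γ1] [Fintype Γ2] [Nonempty Γ1] [Nonempty Γ2]
    (κ lam : ℝ) (hκlam : κ < lam) (hlam0 : lam < 0)
    (T1 : Γ1 → Prop) (T2 : Γ2 → Prop) (C : Γ1 → Γ2 → Prop)
    (p1 : Γ1 → ℝ) (p2 : Γ2 → ℝ)
    (hp1 : ∀ i, 0 < p1 i) (hp2 : ∀ j, 0 < p2 j)
    (hA : AssumptionA T1 T2 C)
    (i1 : Γ1) (j1 : Γ2) (i2 : Γ1) (j2 : Γ2)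
    (h1 : NashEq (aPay κ lam T1 C p1) (bPay κ lam T2 C p2) i1 j1)
    (hf1 : Feasible T1 T2 C i1 j1)
    (h2 : NashEq (aPay κ lam T1 C p1) (bPay κ lam T2 C p2) i2 j2)
    (hf2 : ¬ Feasible T1 T2 C i2 j2) :
    aPay κ lam T1 C p1 i2 j2 ≤ aPay κ lam T1 C p1 i1 j1 ∧
    bPay κ lam T2 C p2 i2 j2 ≤ bPay κ lam T2 C p2 i1 j1 ∧
    (aPay κ lam T1 C p1 i2 j2 < aPay κ lam T1 C p1 i1 j1 ∨
      bPay κ lam T2 C p2 i2 j2 < bPay κ lam T2 C p2 i1 j1) := by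
  obtain ⟨ha, hb⟩ := stmt7_general hκlam (hlam0.trans (hp1 i1)) (hlam0.trans (hp2 j1)) hf1 h2 hf2
  exact ⟨ha.le, hb.le, Or.inl ha⟩

end
end

section
/- Under Assumption 2.b, every sequential maximization pair is a pure-strategy Nash equilibrium of the cooperative game, and the set of sequential maximization pairs is nonempty. -/
open scoped Classical

noncomputable section

/-!
By optimality of `jS` and Assumption 2.b, the follower's payoff at a sequential maximization pair
`(iS, jS)` exceeds `lam`, so the pair does not collide. There the leader's cooperative payoff equals
`aSeq`, which bounds the cooperative payoff from above everywhere because a collision is never worth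
more than progress; and no deviation increases `aSeq`.
-/

section

variable {Γ1 Γ2 : Type*}

theorem NashEq.of_le_of_eq {A B : Γ1 → Γ2 → ℝ} {f : Γ1 → ℝ} {i : Γ1} {j : Γ2}
    (hle : ∀ i', A i' j ≤ f i') (heq : A i j = f i) (hf : ∀ i', f i' ≤ f i)
    (hB : ∀ j', B i j' ≤ B i j) : NashEq A B i j :=
  ⟨fun i' => ((hle i').trans (hf i')).trans_eq heq.symm, hB⟩

theorem aPay_eq_aSeq_of_not_collision (κ lam : ℝ) (T1 : Γ1 → Prop) {C : Γ1 → Γ2 → Prop}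
    (p1 : Γ1 → ℝ) {i : Γ1} {j : Γ2} (hC : ¬ C i j) :
    aPay κ lam T1 C p1 i j = aSeq κ T1 p1 i := by
  simp only [aPay, aSeq, if_neg hC]

theorem aPay_le_aSeq (κ : ℝ) {lam : ℝ} (T1 : Γ1 → Prop) (C : Γ1 → Γ2 → Prop) {p1 : Γ1 → ℝ}
    {i : Γ1} (hp1 : lam ≤ p1 i) (j : Γ2) :
    aPay κ lam T1 C p1 i j ≤ aSeq κ T1 p1 i := by
  unfold aPay aSeq
  split_ifs
  exacts [le_rfl, hp1, le_rfl]

theorem bPay_le_of_collision {κ lam : ℝ} (hκlam : κ ≤ lam) (T2 : Γ2 → Prop)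
    {C : Γ1 → Γ2 → Prop} (p2 : Γ2 → ℝ) {i : Γ1} {j : Γ2} (hC : C i j) :
    bPay κ lam T2 C p2 i j ≤ lam := by
  rw [bPay, if_pos hC]
  split_ifs
  exacts [hκlam, le_rfl]

variable {κ lam : ℝ} {T1 : Γ1 → Prop} {T2 : Γ2 → Prop} {C : Γ1 → Γ2 → Prop}
  {p1 : Γ1 → ℝ} {p2 : Γ2 → ℝ}

theorem SeqMaxPair.not_collision {i : Γ1} {j : Γ2} (h : SeqMaxPair κ lam T1 T2 C p1 p2 i j)
    (hκlam : κ ≤ lam) (hi : ∃ j', lam < bPay κ lam T2 C p2 i j') : ¬ C i j := by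
  obtain ⟨j', hj'⟩ := hi
  have hlt : lam < bPay κ lam T2 C p2 i j := hj'.trans_le (h.2 j')
  exact fun hC => hlt.not_ge (bPay_le_of_collision hκlam T2 p2 hC)

theorem SeqMaxPair.nashEq {i : Γ1} {j : Γ2} (h : SeqMaxPair κ lam T1 T2 C p1 p2 i j)
    (hκlam : κ ≤ lam) (hp1 : ∀ i', lam ≤ p1 i')
    (hi : ∃ j', lam < bPay κ lam T2 C p2 i j') :
    NashEq (aPay κ lam T1 C p1) (bPay κ lam T2 C p2) i j :=
  .of_le_of_eq (fun i' => aPay_le_aSeq κ T1 C (hp1 i') j)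
    (aPay_eq_aSeq_of_not_collision κ lam T1 p1 (h.not_collision hκlam hi)) h.1 h.2

theorem exists_forall_le_of_upperSemicontinuous {X α : Type*} [TopologicalSpace X]
    [CompactSpace X] [Nonempty X] [LinearOrder α] {f : X → α} (hf : UpperSemicontinuous f) :
    ∃ x, ∀ y, f y ≤ f x := by
  obtain ⟨x, -, hx⟩ :=
    (hf.upperSemicontinuousOn Set.univ).exists_isMaxOn Set.univ_nonempty isCompact_univ
  exact ⟨x, isMaxOn_univ_iff.mp hx⟩

variable [TopologicalSpace Γ1] [CompactSpace Γ1] [Nonempty Γ1]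
  [TopologicalSpace Γ2] [CompactSpace Γ2] [Nonempty Γ2]

theorem exists_seqMaxPair (ha : UpperSemicontinuous (aSeq κ T1 p1))
    (hb : ∀ i, UpperSemicontinuous (bPay κ lam T2 C p2 i)) :
    ∃ (i : Γ1) (j : Γ2), SeqMaxPair κ lam T1 T2 C p1 p2 i j := by
  obtain ⟨i, hi⟩ := exists_forall_le_of_upperSemicontinuous ha
  obtain ⟨j, hj⟩ := exists_forall_le_of_upperSemicontinuous (hb i)
  exact ⟨i, j, hi, hj⟩

theorem stmt9_general (hκlam : κ ≤ lam) (hp1 : ∀ i, lam ≤ p1 i)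
    (ha : UpperSemicontinuous (aSeq κ T1 p1))
    (hb : ∀ i, UpperSemicontinuous (bPay κ lam T2 C p2 i))
    (hB : ∀ i, (∀ i', aSeq κ T1 p1 i' ≤ aSeq κ T1 p1 i) → ∃ j, lam < bPay κ lam T2 C p2 i j) :
    (∀ (i : Γ1) (j : Γ2), SeqMaxPair κ lam T1 T2 C p1 p2 i j →
      NashEq (aPay κ lam T1 C p1) (bPay κ lam T2 C p2) i j) ∧
    ∃ (i : Γ1) (j : Γ2), SeqMaxPair κ lam T1 T2 C p1 p2 i j :=
  ⟨fun i _ h => h.nashEq hκlam hp1 (hB i h.1), exists_seqMaxPair ha hb⟩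

end

theorem stmt9 {Γ1 Γ2 : Type*} [Fintype Γ1] [Fintype Γ2] [Nonempty Γ1] [Nonempty Γ2]
    (κ lam : ℝ) (hκlam : κ < lam) (hlam0 : lam < 0)
    (T1 : Γ1 → Prop) (T2 : Γ2 → Prop) (C : Γ1 → Γ2 → Prop)
    (p1 : Γ1 → ℝ) (p2 : Γ2 → ℝ)
    (hp1 : ∀ i, 0 < p1 i) (hp2 : ∀ j, 0 < p2 j)
    (hB : AssumptionB κ lam T1 T2 C p1 p2) :
    (∀ (i : Γ1) (j : Γ2), SeqMaxPair κ lam T1 T2 C p1 p2 i j →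
      NashEq (aPay κ lam T1 C p1) (bPay κ lam T2 C p2) i j) ∧
    ∃ (i : Γ1) (j : Γ2), SeqMaxPair κ lam T1 T2 C p1 p2 i j := by
  -- Finite types are compact, and every payoff is continuous, in the discrete topology `⊥`.
  let _ : TopologicalSpace Γ1 := ⊥
  let _ : TopologicalSpace Γ2 := ⊥
  exact stmt9_general hκlam.le (fun i => (hlam0.trans (hp1 i)).le)
    continuous_bot.upperSemicontinuous (fun _ => continuous_bot.upperSemicontinuous)
    fun i hi => hB.2.imp fun _ h => h i hi

end
end
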